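/- Let v ∈ ℂ^m ⊗ ℂ^n be a unit vector and fix 1 ≤ k ≤ min(m,n). Then SR(v) ≤ k if and only if ‖L(|v⟩⟨v|)‖_{(k²,2)}° ≤ 1. -/

import Mathlib

open scoped Kronecker ComplexOrder
open Matrix

namespace Ent

variable {ι κ : Type*} [Fintype ι] [Fintype κ]

/-- Inner product ⟨v,w⟩ = Σᵢ conj(v i) * (w i) (conjugate-linear in the first argument). -/
noncomputable def vinner (v w : ι → ℂ) : ℂ := dotProduct (star v) w

/-- An elementary (product) tensor a ⊗ b in ℂ^ι ⊗ ℂ^κ. -/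
def prodVec (a : ι → ℂ) (b : κ → ℂ) : ι × κ → ℂ := fun p => a p.1 * b p.2

/-- `v` has Schmidt rank at most `k`. -/
def SchmidtRankLE (k : ℕ) (v : ι × κ → ℂ) : Prop :=
  ∃ (a : Fin k → ι → ℂ) (b : Fin k → κ → ℂ), v = ∑ i, prodVec (a i) (b i)

/-- The rank-one operator |v⟩⟨w|. -/
noncomputable def ketBra (v : ι → ℂ) (w : κ → ℂ) : Matrix ι κ ℂ :=
  Matrix.vecMulVec v (star w)

/-- A finite family of vectors is orthonormal. -/
def Orthonormal' {N : Type*} [DecidableEq N] (v : N → ι → ℂ) : Prop :=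
  ∀ i j, vinner (v i) (v j) = if i = j then 1 else 0

/-- The S(k)-norm of `X ∈ M_ι ⊗ M_κ`. -/
noncomputable def SkNorm (k : ℕ) (X : Matrix (ι × κ) (ι × κ) ℂ) : ℝ :=
  sSup { r | ∃ v w : ι × κ → ℂ, vinner v v = 1 ∧ vinner w w = 1 ∧
    SchmidtRankLE k v ∧ SchmidtRankLE k w ∧
    r = ‖vinner v (X.mulVec w)‖ }

/-- The product numerical radius r_k^⊗. -/
noncomputable def prodRad (k : ℕ) (Y : Matrix (ι × κ) (ι × κ) ℂ) : ℝ :=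
  sSup { r | ∃ v : ι × κ → ℂ, vinner v v = 1 ∧ SchmidtRankLE k v ∧
    r = ‖vinner v (Y.mulVec v)‖ }

/-- The norm ‖·‖_{γ,k}. -/
noncomputable def gammaNorm (k : ℕ) (X : Matrix (ι × κ) (ι × κ) ℂ) : ℝ :=
  sInf { r | ∃ (N : ℕ) (c : Fin N → ℂ) (v w : Fin N → (ι × κ → ℂ)),
    (∀ i, vinner (v i) (v i) = 1 ∧ vinner (w i) (w i) = 1 ∧
      SchmidtRankLE k (v i) ∧ SchmidtRankLE k (w i)) ∧
    X = ∑ i, c i • ketBra (v i) (w i) ∧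
    r = ∑ i, ‖c i‖ }

/-- `ρ` is a density matrix. -/
def IsDensity (ρ : Matrix ι ι ℂ) : Prop := ρ.PosSemidef ∧ ρ.trace = 1

/-- `ρ` has Schmidt number at most `k`: it is a convex combination of projections onto
unit vectors of Schmidt rank at most `k`. -/
def SchmidtNumLE (k : ℕ) (ρ : Matrix (ι × κ) (ι × κ) ℂ) : Prop :=
  ∃ (N : ℕ) (p : Fin N → ℝ) (v : Fin N → (ι × κ → ℂ)),
    (∀ i, 0 ≤ p i ∧ vinner (v i) (v i) = 1 ∧ SchmidtRankLE k (v i)) ∧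
    (∑ i, p i) = 1 ∧ ρ = ∑ i, p i • ketBra (v i) (v i)

/-- The robustness norm R_k on Hermitian operators. -/
noncomputable def Rk (k : ℕ) (Y : Matrix (ι × κ) (ι × κ) ℂ) : ℝ :=
  sInf { r | ∃ (c₁ c₂ : ℝ) (ρ₁ ρ₂ : Matrix (ι × κ) (ι × κ) ℂ),
    0 ≤ c₁ ∧ 0 ≤ c₂ ∧ IsDensity ρ₁ ∧ IsDensity ρ₂ ∧
    SchmidtNumLE k ρ₁ ∧ SchmidtNumLE k ρ₂ ∧
    Y = c₁ • ρ₁ - c₂ • ρ₂ ∧ r = c₁ + c₂ }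

/-- `Y` is k-block positive: ⟨v|Y|v⟩ ≥ 0 for every unit vector of Schmidt rank at most `k`. -/
def KBlockPos (k : ℕ) (Y : Matrix (ι × κ) (ι × κ) ℂ) : Prop :=
  ∀ v : ι × κ → ℂ, vinner v v = 1 → SchmidtRankLE k v →
    0 ≤ (vinner v (Y.mulVec v)).re

/-- Dual of a norm on matrices, w.r.t. the Hilbert–Schmidt inner product ⟨W,X⟩ = Tr(Wᴴ X). -/
noncomputable def dualNormM (f : Matrix ι κ ℂ → ℝ) (X : Matrix ι κ ℂ) : ℝ :=
  sSup { r | ∃ W : Matrix ι κ ℂ, f W ≤ 1 ∧ r = ‖(Wᴴ * X).trace‖ }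

/-- Dual of a norm, computed in the real Hilbert space of Hermitian matrices with the
Hilbert–Schmidt inner product ⟨W,Y⟩ = Tr(WY). -/
noncomputable def dualNormHerm (f : Matrix ι ι ℂ → ℝ) (Y : Matrix ι ι ℂ) : ℝ :=
  sSup { r | ∃ W : Matrix ι ι ℂ, W.IsHermitian ∧ f W ≤ 1 ∧ r = |((W * Y).trace).re| }

/-- The Frobenius norm of a matrix. -/
noncomputable def frobNorm (X : Matrix ι κ ℂ) : ℝ :=
  Real.sqrt (∑ i, ∑ j, Complex.normSq (X i j))

/-- The (k,2)-norm: ‖X‖_{(k,2)} = sup { |Tr(XY)| : rank Y ≤ k, ‖Y‖_F ≤ 1 }. -/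
noncomputable def kNorm (k : ℕ) (X : Matrix ι κ ℂ) : ℝ :=
  sSup { r | ∃ Y : Matrix κ ι ℂ, Y.rank ≤ k ∧ frobNorm Y ≤ 1 ∧
    r = ‖(X * Y).trace‖ }

/-- The trace norm: the sum of the singular values, i.e. of the square roots of the
eigenvalues of Xᴴ X. -/
noncomputable def traceNorm [DecidableEq κ] (X : Matrix ι κ ℂ) : ℝ :=
  ∑ i, Real.sqrt ((Matrix.isHermitian_conjTranspose_mul_self X).eigenvalues i)

/-- The s(k) vector norm: sup of |⟨u,w⟩| over unit vectors u of Schmidt rank at most k. -/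
noncomputable def skVecNorm (k : ℕ) (w : ι × κ → ℂ) : ℝ :=
  sSup { r | ∃ u : ι × κ → ℂ, vinner u u = 1 ∧ SchmidtRankLE k u ∧
    r = ‖vinner u w‖ }

/-- Dual of a norm on vectors. -/
noncomputable def dualNormV (f : (ι × κ → ℂ) → ℝ) (v : ι × κ → ℂ) : ℝ :=
  sSup { r | ∃ w : ι × κ → ℂ, f w ≤ 1 ∧ r = ‖vinner w v‖ }

/-- The realignment map, L(X)_{(i,k),(j,l)} = X_{(i,j),(k,l)}. -/
def realign {m n : ℕ} (X : Matrix (Fin m × Fin n) (Fin m × Fin n) ℂ) :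
    Matrix (Fin m × Fin m) (Fin n × Fin n) ℂ :=
  fun p q => X (p.1, q.1) (p.2, q.2)

/-- The projective tensor norm on M_{m,n} ⊗ M_{m,n}. -/
noncomputable def projNorm {m n : ℕ} (Z : Matrix (Fin m × Fin m) (Fin n × Fin n) ℂ) : ℝ :=
  sInf { r | ∃ (N : ℕ) (A B : Fin N → Matrix (Fin m) (Fin n) ℂ),
    Z = ∑ i, A i ⊗ₖ B i ∧ r = ∑ i, traceNorm (A i) * traceNorm (B i) }

/-!
Let `A` be the coefficient matrix of `v`, so that the Schmidt rank of `v` is the rank of `A`.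
Realigning `|v⟩⟨v|` gives `Z = A ⊗ₖ conj A`, of rank `(rank A)²`, so the question is whether
`rank Z ≤ k²`. This is decided by the `(r,2)`-norm for `r = k²`: it never exceeds the Frobenius
norm, and by compactness it is attained at some `Y` of rank at most `r` in the Frobenius unit
ball, so it equals the Frobenius norm of `Z` exactly when `Zᴴ` is proportional to such a `Y`
(the equality case of Cauchy–Schwarz), that is, when `rank Z ≤ r`. Dually, testing the dual norm
on `Z` itself gives `‖Z‖_F² ≤ ‖Z‖_{(r,2)} ‖Z‖_{(r,2)}°`, so `‖Z‖_{(r,2)}° ≤ ‖Z‖_F` forces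
`‖Z‖_F ≤ ‖Z‖_{(r,2)}`.
-/

section Rank

variable {l m n p : Type*} {K : Type*} [Field K]

theorem rank_le_iff_exists_eq_mul [Fintype n] {r : ℕ} {A : Matrix m n K} :
    A.rank ≤ r ↔ ∃ (B : Matrix m (Fin r) K) (C : Matrix (Fin r) n K), A = B * C := by
  classical
  constructor
  · intro hA
    have hdim : Module.finrank K A.mulVecLin.range ≤ Module.finrank K (Fin r → K) := by
      rwa [Module.finrank_fin_fun]
    obtain ⟨f, hf⟩ := finrank_le_iff_exists_linearMap.mp hdim
    obtain ⟨g, hgf⟩ := f.exists_leftInverse_of_injective (LinearMap.ker_eq_bot.mpr hf)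
    refine ⟨(A.mulVecLin.range.subtype ∘ₗ g).toMatrix',
      (f ∘ₗ A.mulVecLin.rangeRestrict).toMatrix', ?_⟩
    rw [← LinearMap.toMatrix'_comp, LinearMap.comp_assoc, ← LinearMap.comp_assoc _ f g, hgf,
      LinearMap.id_comp, LinearMap.subtype_comp_codRestrict, ← toLin'_apply',
      LinearMap.toMatrix'_toLin']
  · rintro ⟨B, C, rfl⟩
    simpa using (rank_mul_le_left B C).trans B.rank_le_card_width

theorem finrank_range_tensorProduct_map {V V' W W' : Type*} [AddCommGroup V] [Module K V]
    [AddCommGroup V'] [Module K V'] [AddCommGroup W] [Module K W] [AddCommGroup W'] [Module K W']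
    (f : V →ₗ[K] V') (g : W →ₗ[K] W') :
    Module.finrank K (TensorProduct.map f g).range =
      Module.finrank K f.range * Module.finrank K g.range := by
  have hfactor : TensorProduct.map f g =
      TensorProduct.mapIncl f.range g.range ∘ₗ
        TensorProduct.map f.rangeRestrict g.rangeRestrict := by
    rw [TensorProduct.mapIncl, ← TensorProduct.map_comp, LinearMap.subtype_comp_codRestrict,
      LinearMap.subtype_comp_codRestrict]
  have hsurj : (TensorProduct.map f.rangeRestrict g.rangeRestrict).range = ⊤ :=
    LinearMap.range_eq_top.mpr <|
      TensorProduct.map_surjective f.surjective_rangeRestrict g.surjective_rangeRestrict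
  rw [hfactor, LinearMap.range_comp_of_range_eq_top _ hsurj,
    LinearMap.finrank_range_of_inj (Module.Flat.tensorProduct_mapIncl_injective_of_left _ _),
    Module.finrank_tensorProduct]

theorem rank_kronecker [Finite l] [Fintype m] [Finite n] [Fintype p]
    (A : Matrix l m K) (B : Matrix n p K) : (A ⊗ₖ B).rank = A.rank * B.rank := by
  classical
  rw [rank_eq_finrank_range_toLin (A ⊗ₖ B)
      ((Pi.basisFun K l).tensorProduct (Pi.basisFun K n))
      ((Pi.basisFun K m).tensorProduct (Pi.basisFun K p)),
    toLin_kronecker, finrank_range_tensorProduct_map, ← rank_eq_finrank_range_toLin,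
    ← rank_eq_finrank_range_toLin]

theorem rank_smul_le [Fintype n] (c : K) (A : Matrix m n K) : (c • A).rank ≤ A.rank := by
  classical
  simpa using rank_mul_le_left A (c • (1 : Matrix n n K))

theorem isClosed_setOf_rank_le {𝕜 : Type*} [NontriviallyNormedField 𝕜] [CompleteSpace 𝕜]
    [Finite m] [Fintype n] (r : ℕ) : IsClosed {A : Matrix m n 𝕜 | A.rank ≤ r} := by
  classical
  cases nonempty_fintype m
  let toCLM : Matrix m n 𝕜 →ₗ[𝕜] (n → 𝕜) →L[𝕜] (m → 𝕜) :=
    LinearMap.toContinuousLinearMap.toLinearMap ∘ₗ toLin'.toLinearMap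
  have hopen := (isOpen_setOfPred_nat_le_rank (𝕜 := 𝕜) (E := n → 𝕜) (F := m → 𝕜)
    (r + 1)).preimage toCLM.continuous_of_finiteDimensional
  convert hopen.isClosed_compl using 1
  ext A
  have hrank : (toCLM A : (n → 𝕜) →ₗ[𝕜] (m → 𝕜)).rank = (A.rank : Cardinal) :=
    (Module.finrank_eq_rank _ _).symm
  simp only [Set.mem_compl_iff, Set.mem_preimage, Set.mem_ofPred_eq, hrank, Nat.cast_le]
  omega

end Rank

section Frobenius

open scoped Matrix.Norms.Frobenius

theorem frobNorm_eq_norm (X : Matrix ι κ ℂ) : frobNorm X = ‖X‖ := by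
  simp [frobNorm, frobenius_norm_def, Real.sqrt_eq_rpow, Complex.normSq_eq_norm_sq]

theorem frobNorm_eq_norm_toLp_vec (X : Matrix ι κ ℂ) :
    frobNorm X = ‖WithLp.toLp 2 X.vec‖ := by
  rw [EuclideanSpace.norm_eq, frobNorm, Fintype.sum_prod_type_right]
  simp [Matrix.vec, Complex.normSq_eq_norm_sq]

theorem trace_mul_eq_inner (X : Matrix ι κ ℂ) (Y : Matrix κ ι ℂ) :
    (X * Y).trace = inner ℂ (WithLp.toLp 2 Xᴴ.vec) (WithLp.toLp 2 Y.vec) := by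
  rw [EuclideanSpace.inner_toLp_toLp, dotProduct_comm, star_vec_dotProduct_vec,
    conjTranspose_conjTranspose]

theorem frobNorm_nonneg (X : Matrix ι κ ℂ) : 0 ≤ frobNorm X :=
  Real.sqrt_nonneg _

theorem frobNorm_conjTranspose (X : Matrix ι κ ℂ) : frobNorm Xᴴ = frobNorm X := by
  simp only [frobNorm_eq_norm, frobenius_norm_conjTranspose]

theorem frobNorm_smul (c : ℂ) (X : Matrix ι κ ℂ) : frobNorm (c • X) = ‖c‖ * frobNorm X := by
  simp only [frobNorm_eq_norm, norm_smul]

theorem frobNorm_eq_zero {X : Matrix ι κ ℂ} : frobNorm X = 0 ↔ X = 0 := by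
  rw [frobNorm_eq_norm, norm_eq_zero]

theorem norm_trace_conjTranspose_mul_self (X : Matrix ι κ ℂ) :
    ‖(Xᴴ * X).trace‖ = frobNorm X ^ 2 := by
  simp [trace_mul_eq_inner, frobNorm_eq_norm_toLp_vec]

theorem norm_trace_conjTranspose_mul (X Y : Matrix ι κ ℂ) :
    ‖(Xᴴ * Y).trace‖ = ‖(X * Yᴴ).trace‖ := by
  rw [← norm_star, ← trace_conjTranspose, conjTranspose_mul, conjTranspose_conjTranspose,
    trace_mul_comm]

theorem norm_trace_mul_le_frobNorm_mul_frobNorm (X : Matrix ι κ ℂ) (Y : Matrix κ ι ℂ) :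
    ‖(X * Y).trace‖ ≤ frobNorm X * frobNorm Y := by
  rw [trace_mul_eq_inner, ← frobNorm_conjTranspose X, frobNorm_eq_norm_toLp_vec,
    frobNorm_eq_norm_toLp_vec]
  exact norm_inner_le_norm _ _

theorem eq_zero_or_conjTranspose_eq_smul_of_norm_trace_mul_eq {X : Matrix ι κ ℂ} {Y : Matrix κ ι ℂ}
    (h : ‖(X * Y).trace‖ = frobNorm X * frobNorm Y) : Y = 0 ∨ ∃ c : ℂ, Xᴴ = c • Y := by
  rw [trace_mul_eq_inner, ← frobNorm_conjTranspose X, frobNorm_eq_norm_toLp_vec,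
    frobNorm_eq_norm_toLp_vec, norm_inner_symm, mul_comm] at h
  have hprop := ((norm_inner_eq_norm_tfae ℂ _ _).out 0 2).mp h
  simpa only [← WithLp.toLp_smul, (WithLp.toLp_injective 2).eq_iff, ← vec_smul, vec_inj,
    WithLp.ofLp_zero, vec_eq_zero_iff] using hprop

theorem rank_le_rank_of_frobNorm_le_norm_trace_mul {X : Matrix ι κ ℂ} {Y : Matrix κ ι ℂ}
    (hY : frobNorm Y ≤ 1) (h : frobNorm X ≤ ‖(X * Y).trace‖) : X.rank ≤ Y.rank := by
  have hXY : frobNorm X * frobNorm Y ≤ frobNorm X :=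
    mul_le_of_le_one_right (frobNorm_nonneg X) hY
  obtain rfl | ⟨c, hc⟩ := eq_zero_or_conjTranspose_eq_smul_of_norm_trace_mul_eq
    ((norm_trace_mul_le_frobNorm_mul_frobNorm X Y).antisymm (hXY.trans h))
  · have hX : X = 0 := by
      rw [← frobNorm_eq_zero]
      exact le_antisymm (by simpa using h) (frobNorm_nonneg X)
    simp [hX]
  · rw [← rank_conjTranspose, hc]
    exact rank_smul_le c Y

theorem isCompact_setOf_rank_le_frobNorm_le (r : ℕ) (R : ℝ) :
    IsCompact {Y : Matrix ι κ ℂ | Y.rank ≤ r ∧ frobNorm Y ≤ R} := by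
  have : ProperSpace (Matrix ι κ ℂ) := FiniteDimensional.proper ℂ _
  have hball : {Y : Matrix ι κ ℂ | frobNorm Y ≤ R} = Metric.closedBall 0 R := by
    ext Y
    simp [frobNorm_eq_norm]
  exact (hball ▸ isCompact_closedBall 0 R).inter_left (isClosed_setOf_rank_le r)

end Frobenius

section KNorm

theorem bddAbove_kNorm (r : ℕ) (X : Matrix ι κ ℂ) :
    BddAbove {s | ∃ Y : Matrix κ ι ℂ, Y.rank ≤ r ∧ frobNorm Y ≤ 1 ∧ s = ‖(X * Y).trace‖} := by
  refine ⟨frobNorm X, ?_⟩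
  rintro _ ⟨Y, -, hY, rfl⟩
  exact (norm_trace_mul_le_frobNorm_mul_frobNorm X Y).trans
    (mul_le_of_le_one_right (frobNorm_nonneg X) hY)

theorem kNorm_nonneg (r : ℕ) (X : Matrix ι κ ℂ) : 0 ≤ kNorm r X := by
  refine Real.sSup_nonneg ?_
  rintro _ ⟨Y, -, -, rfl⟩
  exact norm_nonneg _

theorem norm_trace_mul_le_kNorm_mul_frobNorm {r : ℕ} (X : Matrix ι κ ℂ) {Y : Matrix κ ι ℂ}
    (hY : Y.rank ≤ r) : ‖(X * Y).trace‖ ≤ kNorm r X * frobNorm Y := by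
  obtain hY0 | hY0 := (frobNorm_nonneg Y).eq_or_lt
  · simp [frobNorm_eq_zero.mp hY0.symm, frobNorm]
  obtain ⟨c, hc⟩ : ∃ c : ℂ, ‖c‖ = (frobNorm Y)⁻¹ :=
    ⟨_, Complex.norm_of_nonneg (inv_nonneg.mpr hY0.le)⟩
  have hle : ‖(X * c • Y).trace‖ ≤ kNorm r X :=
    le_csSup (bddAbove_kNorm r X) ⟨c • Y, (rank_smul_le c Y).trans hY,
      by rw [frobNorm_smul, hc, inv_mul_cancel₀ hY0.ne'], rfl⟩
  rwa [Matrix.mul_smul, trace_smul, norm_smul, hc, inv_mul_le_iff₀' hY0] at hle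

theorem norm_apply_le_kNorm {r : ℕ} (hr : 1 ≤ r) (X : Matrix ι κ ℂ) (i : ι) (j : κ) :
    ‖X i j‖ ≤ kNorm r X := by
  classical
  have hrank : (single j i (1 : ℂ)).rank ≤ r := by
    rw [single_eq_single_vecMulVec_single]
    exact (rank_vecMulVec_le _ _).trans hr
  have hfrob : frobNorm (single j i (1 : ℂ)) = 1 := by
    simp [frobNorm, single_apply, apply_ite, ite_and]
  simpa [trace_mul_single, hfrob] using norm_trace_mul_le_kNorm_mul_frobNorm X hrank

theorem kNorm_smul (r : ℕ) (c : ℂ) (X : Matrix ι κ ℂ) :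
    kNorm r (c • X) = ‖c‖ * kNorm r X := by
  rw [kNorm, kNorm, ← smul_eq_mul, ← Real.sSup_smul_of_nonneg (norm_nonneg c)]
  congr 1
  ext s
  simp [Set.mem_smul_set, eq_comm, and_assoc]

theorem exists_kNorm_eq_norm_trace_mul (r : ℕ) (X : Matrix ι κ ℂ) :
    ∃ Y : Matrix κ ι ℂ, Y.rank ≤ r ∧ frobNorm Y ≤ 1 ∧ kNorm r X = ‖(X * Y).trace‖ := by
  have hne : {Y : Matrix κ ι ℂ | Y.rank ≤ r ∧ frobNorm Y ≤ 1}.Nonempty :=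
    ⟨0, by simp [frobNorm]⟩
  have hcont : Continuous fun Y : Matrix κ ι ℂ => ‖(X * Y).trace‖ := by fun_prop
  obtain ⟨Y, ⟨hrank, hfrob⟩, hY⟩ := (isCompact_setOf_rank_le_frobNorm_le r 1).exists_sSup_image_eq
    hne hcont.continuousOn
  refine ⟨Y, hrank, hfrob, ?_⟩
  rw [← hY, kNorm]
  congr 1
  ext s
  simp [eq_comm, and_assoc]

theorem rank_le_of_frobNorm_le_kNorm {r : ℕ} {X : Matrix ι κ ℂ} (h : frobNorm X ≤ kNorm r X) :
    X.rank ≤ r := by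
  obtain ⟨Y, hrank, hfrob, hY⟩ := exists_kNorm_eq_norm_trace_mul r X
  exact (rank_le_rank_of_frobNorm_le_norm_trace_mul hfrob (hY ▸ h)).trans hrank

end KNorm

section Dual

theorem bddAbove_dualNormM {f : Matrix ι κ ℂ → ℝ} (hf : ∀ W i j, ‖W i j‖ ≤ f W)
    (X : Matrix ι κ ℂ) :
    BddAbove {s | ∃ W : Matrix ι κ ℂ, f W ≤ 1 ∧ s = ‖(Wᴴ * X).trace‖} := by
  refine ⟨∑ j, ∑ i, ‖X i j‖, ?_⟩
  rintro _ ⟨W, hW, rfl⟩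
  refine norm_sum_le_of_le _ fun j _ => norm_sum_le_of_le _ fun i _ => ?_
  calc ‖Wᴴ j i * X i j‖ = ‖W i j‖ * ‖X i j‖ := by rw [conjTranspose_apply, norm_mul, norm_star]
    _ ≤ ‖X i j‖ := mul_le_of_le_one_left (norm_nonneg _) ((hf W i j).trans hW)

theorem norm_trace_conjTranspose_mul_le_mul_dualNormM {f : Matrix ι κ ℂ → ℝ}
    (hf_smul : ∀ (c : ℂ) W, f (c • W) = ‖c‖ * f W) (hf : ∀ W i j, ‖W i j‖ ≤ f W)
    (W X : Matrix ι κ ℂ) : ‖(Wᴴ * X).trace‖ ≤ f W * dualNormM f X := by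
  obtain rfl | hW := eq_or_ne W 0
  · have hf0 : f 0 = 0 := by simpa using hf_smul 0 0
    simp [hf0]
  have hfW : 0 < f W := by
    obtain ⟨i, j, hij⟩ : ∃ i j, W i j ≠ 0 := by
      contrapose! hW
      exact Matrix.ext hW
    exact (norm_pos_iff.mpr hij).trans_le (hf W i j)
  obtain ⟨c, hc⟩ : ∃ c : ℂ, ‖c‖ = (f W)⁻¹ :=
    ⟨_, Complex.norm_of_nonneg (inv_nonneg.mpr hfW.le)⟩
  have hle : ‖((c • W)ᴴ * X).trace‖ ≤ dualNormM f X :=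
    le_csSup (bddAbove_dualNormM hf X)
      ⟨c • W, by rw [hf_smul, hc, inv_mul_cancel₀ hfW.ne'], rfl⟩
  rwa [conjTranspose_smul, smul_mul, trace_smul, norm_smul, norm_star, hc,
    inv_mul_le_iff₀ hfW] at hle

theorem rank_le_iff_dualNormM_kNorm_le_frobNorm {r : ℕ} (hr : 1 ≤ r) {X : Matrix ι κ ℂ} :
    X.rank ≤ r ↔ dualNormM (kNorm r) X ≤ frobNorm X := by
  constructor
  · intro hX
    refine Real.sSup_le ?_ (frobNorm_nonneg X)
    rintro _ ⟨W, hW, rfl⟩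
    calc ‖(Wᴴ * X).trace‖ = ‖(W * Xᴴ).trace‖ := norm_trace_conjTranspose_mul W X
      _ ≤ kNorm r W * frobNorm Xᴴ :=
        norm_trace_mul_le_kNorm_mul_frobNorm W ((rank_conjTranspose X).trans_le hX)
      _ ≤ frobNorm X := by
        rw [frobNorm_conjTranspose]
        exact mul_le_of_le_one_left (frobNorm_nonneg X) hW
  · intro hX
    obtain hX0 | hX0 := (frobNorm_nonneg X).eq_or_lt
    · simp [frobNorm_eq_zero.mp hX0.symm]
    refine rank_le_of_frobNorm_le_kNorm (le_of_mul_le_mul_right ?_ hX0)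
    calc frobNorm X * frobNorm X = ‖(Xᴴ * X).trace‖ := by
          rw [norm_trace_conjTranspose_mul_self, sq]
      _ ≤ kNorm r X * dualNormM (kNorm r) X :=
        norm_trace_conjTranspose_mul_le_mul_dualNormM (kNorm_smul r) (norm_apply_le_kNorm hr) X X
      _ ≤ kNorm r X * frobNorm X := mul_le_mul_of_nonneg_left hX (kNorm_nonneg r X)

end Dual

section Realign

/-- The matrix of coefficients of a vector of `K^l ⊗ K^m`, through which the Schmidt rank of a
vector becomes the rank of a matrix. -/
def coeffMatrix {l m K : Type*} (v : l × m → K) : Matrix l m K :=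
  of (Function.curry v)

theorem schmidtRankLE_iff_rank_coeffMatrix_le {l m : Type*} [Fintype m] {k : ℕ}
    {v : l × m → ℂ} :
    SchmidtRankLE k v ↔ (coeffMatrix v).rank ≤ k := by
  rw [rank_le_iff_exists_eq_mul]
  have hsum (B : Matrix l (Fin k) ℂ) (C : Matrix (Fin k) m ℂ) :
      v = ∑ i, prodVec (Bᵀ i) (C i) ↔ coeffMatrix v = B * C := by
    simp [funext_iff, ← Matrix.ext_iff, coeffMatrix, prodVec, mul_apply, Finset.sum_apply]
  exact ⟨fun ⟨a, b, h⟩ => ⟨(of a)ᵀ, of b, (hsum _ _).mp h⟩,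
    fun ⟨B, C, h⟩ => ⟨Bᵀ, C, (hsum B C).mpr h⟩⟩

theorem frobNorm_ketBra_self (v : ι → ℂ) : frobNorm (ketBra v v) = ‖vinner v v‖ := by
  have hv : vinner v v = (∑ i, Complex.normSq (v i) : ℝ) := by
    simp [vinner, dotProduct, Complex.normSq_eq_conj_mul_self]
  have hnonneg : 0 ≤ ∑ i, Complex.normSq (v i) :=
    Finset.sum_nonneg fun i _ => Complex.normSq_nonneg (v i)
  have hsum : ∑ i, ∑ j, Complex.normSq (ketBra v v i j) = (∑ i, Complex.normSq (v i)) ^ 2 := by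
    simp [ketBra, vecMulVec_apply, sq, Finset.sum_mul_sum]
  rw [frobNorm, hsum, Real.sqrt_sq hnonneg, hv, Complex.norm_of_nonneg hnonneg]

variable {m n : ℕ}

theorem frobNorm_realign (X : Matrix (Fin m × Fin n) (Fin m × Fin n) ℂ) :
    frobNorm (realign X) = frobNorm X := by
  simp only [frobNorm, realign, Fintype.sum_prod_type]
  congr 1
  exact Finset.sum_congr rfl fun _ _ => Finset.sum_comm

theorem realign_ketBra (v w : Fin m × Fin n → ℂ) :
    realign (ketBra v w) = coeffMatrix v ⊗ₖ (coeffMatrix w)ᴴᵀ := by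
  ext p q
  simp [realign, ketBra, coeffMatrix, vecMulVec_apply]

theorem rank_realign_ketBra (v w : Fin m × Fin n → ℂ) :
    (realign (ketBra v w)).rank = (coeffMatrix v).rank * (coeffMatrix w).rank := by
  rw [realign_ketBra, rank_kronecker, rank_transpose, rank_conjTranspose]

end Realign

theorem schmidtRank_le_iff_dual_k2_realign_general {m n k : ℕ} (hk : 1 ≤ k)
    (v : Fin m × Fin n → ℂ) :
    SchmidtRankLE k v ↔
      dualNormM (kNorm (k ^ 2)) (realign (ketBra v v)) ≤ ‖vinner v v‖ := by
  rw [schmidtRankLE_iff_rank_coeffMatrix_le, ← frobNorm_ketBra_self, ← frobNorm_realign,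
    ← rank_le_iff_dualNormM_kNorm_le_frobNorm (Nat.one_le_pow _ _ hk), rank_realign_ketBra, ← sq,
    Nat.pow_le_pow_iff_left two_ne_zero]

/-- for a unit vector `v`, `SR(v) ≤ k` if and only if
`‖L(|v⟩⟨v|)‖_{(k²,2)}° ≤ 1`. -/
theorem schmidtRank_le_iff_dual_k2_realign {m n k : ℕ} (hk1 : 1 ≤ k) (hk : k ≤ min m n)
    (v : Fin m × Fin n → ℂ) (hv : vinner v v = 1) :
    SchmidtRankLE k v ↔ dualNormM (kNorm (k ^ 2)) (realign (ketBra v v)) ≤ 1 := by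
  rw [schmidtRank_le_iff_dual_k2_realign_general hk1, hv, norm_one]

end Ent
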